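/- Fix t ∈ (0, 2π). Then there exists C > 0 such that for every integer ℓ ≥ 1: | ∫_{−1}^1 [ r·cos((ℓ+1)tr/2)/sin(tr/2) − cos((ℓ+1)t/2)/sin(t/2) ] / (t(1−r²)) dr + (log(t²) + 2γ)·cos((ℓ+1)t/2)/(t·sin(t/2)) + cos((ℓ+1)t/2)/(t·sin(t/2))·log(ℓ+1) − [ (π/2)·sin((ℓ+1)t/2) + (γ + log t)·cos((ℓ+1)t/2) ] / (t·sin(t/2)) | ≤ C/ℓ. -/

import Mathlib

open MeasureTheory Real

/-!
Write `c = t / 2`, `a = (ℓ + 1) t / 2` and `h r = r / sin (c r)`, which extends to an even analytic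
function on a neighbourhood of `[-1, 1]`. Since `r ↦ h r cos (a r)` is even, partial fractions
replace `1 / (1 - r²)` by the simple pole at `1`, so the integral is minus the integral of the
difference quotient of `h r cos (a r)` based at `1`. By the product rule this quotient is the one of
`h` times `cos (a r)`, which integrates to `O(1 / a)` by parts, plus `h 1` times the one of
`cos (a r)`, whose integral is exactly `Re (exp (i a) Ein (2 i a))` for the entire exponential
integral `Ein`. Finally `Ein z = log z + γ + O(1 / |z|)` on the closed right half-plane, where `γ`
comes from `Γ'(1) = -γ`, and `log (2 i a) = log (2 a) + i π / 2` gives the sine and cosine terms.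
-/

section Dslope

variable {𝕜 E : Type*} [NontriviallyNormedField 𝕜] [NormedAddCommGroup E] [NormedSpace 𝕜 E]

lemma analyticAt_dslope {f : 𝕜 → E} {a b : 𝕜} (ha : AnalyticAt 𝕜 f a) (hb : AnalyticAt 𝕜 f b) :
    AnalyticAt 𝕜 (dslope f a) b := by
  rcases eq_or_ne b a with rfl | hba
  · obtain ⟨p, hp⟩ := hb
    exact ⟨_, hp.has_fpower_series_dslope_fslope⟩
  · refine AnalyticAt.congr ?_ (dslope_eventuallyEq_slope_of_ne f hba).symm
    exact ((analyticAt_id.sub analyticAt_const).inv (sub_ne_zero.2 hba)).smul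
      (hb.sub analyticAt_const)

lemma continuous_dslope {f : 𝕜 → E} (hf : Differentiable 𝕜 f) (a : 𝕜) :
    Continuous (dslope f a) :=
  continuousOn_univ.1 ((continuousOn_dslope Filter.univ_mem).2 ⟨hf.continuous.continuousOn, hf a⟩)

lemma dslope_mul {f g : 𝕜 → 𝕜} {a : 𝕜} (hf : DifferentiableAt 𝕜 f a)
    (hg : DifferentiableAt 𝕜 g a) (b : 𝕜) :
    dslope (fun x => f x * g x) a b = dslope f a b * g b + f a * dslope g a b := by
  rcases eq_or_ne b a with rfl | hba
  · simp only [dslope_same, deriv_fun_mul hf hg]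
  · simp only [dslope_of_ne _ hba, slope_def_field]
    ring

end Dslope

lemma continuous_mul_log_of_differentiable {f : ℝ → ℝ} (hf : Differentiable ℝ f) (hf0 : f 0 = 0) :
    Continuous fun x => f x * Real.log x := by
  have h_factor (x : ℝ) : f x * Real.log x = dslope f 0 x * (x * Real.log x) := by
    rw [← sub_smul_dslope_of_zero hf0 x, smul_eq_mul, sub_zero]
    ring
  simp only [h_factor]
  exact (continuous_dslope hf 0).mul Real.continuous_mul_log

section Ein

open Filter Topology

/-- The entire exponential integral `Ein z = ∫₀ᶻ (1 - exp (-w)) / w dw`, with the segment from `0`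
to `z` parametrised by `w = s z`. -/
noncomputable def ein (z : ℂ) : ℂ :=
  ∫ s in (0 : ℝ)..1, (1 - Complex.exp (-(s * z))) / s

lemma ein_zero : ein 0 = 0 := by simp [ein]

lemma mul_dslope_one_sub_exp_neg (z : ℂ) :
    z * dslope (fun w => 1 - Complex.exp (-w)) 0 z = 1 - Complex.exp (-z) := by
  simpa using sub_smul_dslope (fun w => 1 - Complex.exp (-w)) 0 z

lemma hasDerivAt_ein (z : ℂ) :
    HasDerivAt ein (dslope (fun w => 1 - Complex.exp (-w)) 0 z) z := by
  set D := dslope (fun w : ℂ => 1 - Complex.exp (-w)) 0 with hD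
  have hD_diff : Differentiable ℂ D := fun w =>
    (analyticAt_dslope (by fun_prop) (by fun_prop)).differentiableAt
  have hD_cont : Continuous D := hD_diff.continuous
  obtain ⟨P, hP⟩ := hD_diff.isExactOn_univ
  have hP_ray (w : ℂ) (s : ℝ) : HasDerivAt (fun s : ℝ => P (s * w)) (D (s * w) * w) s :=
    (hP _ (Set.mem_univ _)).comp s (hasDerivAt_mul_const w).comp_ofReal
  have hein (w : ℂ) : ein w = P w - P 0 :=
    calc ein w = ∫ s in (0 : ℝ)..1, D (s * w) * w := by
          refine intervalIntegral.integral_congr_Ioo_of_le zero_le_one fun s hs => ?_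
          have hs0 : (s : ℂ) ≠ 0 := Complex.ofReal_ne_zero.2 hs.1.ne'
          rw [div_eq_iff hs0, ← mul_dslope_one_sub_exp_neg, ← hD]
          ring
      _ = P w - P 0 := by
          rw [intervalIntegral.integral_eq_sub_of_hasDerivAt (fun s _ => hP_ray w s)
            (Continuous.intervalIntegrable (by fun_prop) _ _)]
          simp
  rw [funext hein]
  exact (hP z (Set.mem_univ z)).sub_const _

lemma continuous_ein : Continuous ein :=
  continuous_iff_continuousAt.2 fun z => (hasDerivAt_ein z).continuousAt

lemma hasDerivAt_ein_of_ne_zero {z : ℂ} (hz : z ≠ 0) :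
    HasDerivAt ein ((1 - Complex.exp (-z)) / z) z := by
  rw [← mul_dslope_one_sub_exp_neg, mul_div_cancel_left₀ _ hz]
  exact hasDerivAt_ein z

lemma integral_log_mul_exp_neg :
    ∫ s in Set.Ioi (0 : ℝ), ((Real.log s * Real.exp (-s) : ℝ) : ℂ) =
      -Real.eulerMascheroniConstant := by
  have h_int := Complex.hasDerivAt_GammaIntegral (s := 1) (by simp)
  have h_eq : Complex.GammaIntegral =ᶠ[𝓝 1] Complex.Gamma := by
    filter_upwards [Complex.continuous_re.continuousAt.eventually_const_lt
      (by simp : (0 : ℝ) < (1 : ℂ).re)] with s hs using (Complex.Gamma_eq_integral hs).symm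
  simpa using h_int.unique (Complex.hasDerivAt_Gamma_one.congr_of_eventuallyEq h_eq)

lemma tendsto_exp_neg_mul_log_atTop :
    Tendsto (fun x : ℝ => Real.exp (-x) * Real.log x) atTop (𝓝 0) := by
  refine squeeze_zero' ?_ ?_ (tendsto_pow_mul_exp_neg_atTop_nhds_zero 1)
  · filter_upwards [eventually_ge_atTop 1] with x hx
    exact mul_nonneg (Real.exp_nonneg _) (Real.log_nonneg hx)
  · filter_upwards [eventually_ge_atTop 1] with x hx
    rw [pow_one, mul_comm]
    gcongr
    exact Real.log_le_self (by linarith)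

lemma hasDerivAt_ein_sub_one_sub_exp_neg_mul_log {x : ℝ} (hx : 0 < x) :
    HasDerivAt (fun x : ℝ => ein x - ((1 - Real.exp (-x)) * Real.log x : ℝ))
      (-((Real.log x * Real.exp (-x) : ℝ) : ℂ)) x := by
  have hx0 : (x : ℂ) ≠ 0 := Complex.ofReal_ne_zero.2 hx.ne'
  have h_exp : HasDerivAt (fun y : ℝ => 1 - Real.exp (-y)) (Real.exp (-x)) x := by
    simpa using ((hasDerivAt_neg x).exp).const_sub 1
  refine ((hasDerivAt_ein_of_ne_zero hx0).comp_ofReal.sub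
    (h_exp.mul (Real.hasDerivAt_log hx.ne')).ofReal_comp).congr_deriv ?_
  push_cast
  field_simp
  ring

/-- `Ein x - (1 - e⁻ˣ) log x` vanishes at `0` and has derivative `-e⁻ˣ log x`, whose integral over
`(0, ∞)` is `-Γ'(1) = γ`. -/
lemma tendsto_ein_sub_log_atTop :
    Tendsto (fun x : ℝ => ein x - Real.log x) atTop (𝓝 Real.eulerMascheroniConstant) := by
  set f : ℝ → ℂ := fun x => ein x - ((1 - Real.exp (-x)) * Real.log x : ℝ) with hf
  have hf_deriv : ∀ x ∈ Set.Ioi (0 : ℝ),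
      HasDerivAt f (-((Real.log x * Real.exp (-x) : ℝ) : ℂ)) x :=
    fun x hx => hasDerivAt_ein_sub_one_sub_exp_neg_mul_log hx
  have hf_cont : Continuous f :=
    (continuous_ein.comp Complex.continuous_ofReal).sub (Complex.continuous_ofReal.comp
      (continuous_mul_log_of_differentiable (by fun_prop) (by simp)))
  have hf_int : IntegrableOn (fun x : ℝ => -((Real.log x * Real.exp (-x) : ℝ) : ℂ))
      (Set.Ioi 0) := by
    refine (Integrable.of_integral_ne_zero ?_).neg
    rw [integral_log_mul_exp_neg, neg_ne_zero, Complex.ofReal_ne_zero]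
    exact (one_half_pos.trans Real.one_half_lt_eulerMascheroniConstant).ne'
  have hf_lim := tendsto_limUnder_of_hasDerivAt_of_integrableOn_Ioi hf_deriv hf_int
  have h_lim_eq : limUnder atTop f = Real.eulerMascheroniConstant := by
    have h_ftc := integral_Ioi_of_hasDerivAt_of_tendsto hf_cont.continuousWithinAt hf_deriv
      hf_int hf_lim
    have hf_zero : f 0 = 0 := by simp [hf, ein_zero]
    rwa [integral_neg, integral_log_mul_exp_neg, hf_zero, neg_neg, sub_zero, eq_comm] at h_ftc
  rw [h_lim_eq] at hf_lim
  have h_rem := (Complex.continuous_ofReal.tendsto 0).comp tendsto_exp_neg_mul_log_atTop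
  rw [Complex.ofReal_zero] at h_rem
  refine (sub_zero (Real.eulerMascheroniConstant : ℂ) ▸ hf_lim.sub h_rem).congr fun x => ?_
  simp only [hf, Function.comp_apply]
  push_cast
  ring

lemma hasDerivAt_ein_sub_log {z : ℂ} (hz : z ∈ Complex.slitPlane) :
    HasDerivAt (fun w => ein w - Complex.log w) (-(Complex.exp (-z) / z)) z := by
  refine ((hasDerivAt_ein_of_ne_zero (Complex.slitPlane_ne_zero hz)).sub
    (Complex.hasDerivAt_log hz)).congr_deriv ?_
  ring

lemma add_ofReal_mem_slitPlane {z : ℂ} (hz : z ∈ Complex.slitPlane) {s : ℝ} (hs : 0 ≤ s) :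
    z + s ∈ Complex.slitPlane := by
  simp only [Complex.mem_slitPlane_iff, Complex.add_re, Complex.ofReal_re, Complex.add_im,
    Complex.ofReal_im, add_zero] at hz ⊢
  exact hz.imp_left fun h => by linarith

lemma norm_le_norm_add_ofReal {z : ℂ} (hz : 0 ≤ z.re) {s : ℝ} (hs : 0 ≤ s) : ‖z‖ ≤ ‖z + s‖ := by
  rw [Complex.norm_def, Complex.norm_def, Complex.normSq_apply, Complex.normSq_apply]
  refine Real.sqrt_le_sqrt ?_
  simp only [Complex.add_re, Complex.ofReal_re, Complex.add_im, Complex.ofReal_im, add_zero]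
  nlinarith

lemma tendsto_ein_add_sub_log_add_atTop {z : ℂ} (hz : 0 ≤ z.re) :
    Tendsto (fun s : ℝ => ein (z + s) - Complex.log (z + s)) atTop
      (𝓝 Real.eulerMascheroniConstant) := by
  have h_close : Tendsto (fun s : ℝ => (ein (z + s) - Complex.log (z + s)) -
      (ein s - Complex.log s)) atTop (𝓝 0) := by
    refine squeeze_zero_norm' ?_ (by simpa using tendsto_inv_atTop_zero.mul_const ‖z‖)
    filter_upwards [eventually_gt_atTop 0] with s hs
    have h_deriv (w : ℂ) (hw : w ∈ {w : ℂ | s ≤ w.re}) :=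
      (hasDerivAt_ein_sub_log (Complex.mem_slitPlane_iff.2 (.inl (hs.trans_le hw)))
        ).hasDerivWithinAt (s := {w : ℂ | s ≤ w.re})
    have h_deriv_le : ∀ w ∈ {w : ℂ | s ≤ w.re}, ‖-(Complex.exp (-w) / w)‖ ≤ s⁻¹ := by
      intro w (hw : s ≤ w.re)
      rw [norm_neg, norm_div, Complex.norm_exp, ← one_div]
      gcongr
      · exact Real.exp_le_one_iff.2 (by simpa using hs.le.trans hw)
      · exact hw.trans (Complex.re_le_norm w)
    simpa using (convex_halfSpace_re_ge s).norm_image_sub_le_of_norm_hasDerivWithin_le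
      h_deriv h_deriv_le (by simp : s ≤ (s : ℂ).re) (by simpa using hz : s ≤ (z + s : ℂ).re)
  refine (zero_add (Real.eulerMascheroniConstant : ℂ) ▸
    h_close.add tendsto_ein_sub_log_atTop).congr' ?_
  filter_upwards [eventually_ge_atTop 0] with s hs
  rw [Complex.ofReal_log hs, sub_add_cancel]

/-- The derivative `-e⁻ʷ / w` of `Ein w - log w` is integrated along the ray `z + [0, ∞)`, at the
end of which `Ein w - log w` tends to `γ`. -/
theorem norm_ein_sub_log_sub_eulerMascheroniConstant_le {z : ℂ} (hz : 0 ≤ z.re) (hz0 : z ≠ 0) :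
    ‖ein z - Complex.log z - Real.eulerMascheroniConstant‖ ≤ ‖z‖⁻¹ := by
  have hz_slit : z ∈ Complex.slitPlane := by
    refine hz.lt_or_eq.imp id fun hre him => hz0 (Complex.ext hre.symm him)
  have h_deriv : ∀ s ∈ Set.Ici (0 : ℝ), HasDerivAt
      (fun s : ℝ => ein (z + s) - Complex.log (z + s)) (-(Complex.exp (-(z + s)) / (z + s))) s :=
    fun s hs => ((hasDerivAt_ein_sub_log (add_ofReal_mem_slitPlane hz_slit hs)).comp_const_add
      z (s : ℂ)).comp_ofReal
  have h_bound : ∀ s ∈ Set.Ioi (0 : ℝ),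
      ‖-(Complex.exp (-(z + s)) / (z + s))‖ ≤ ‖z‖⁻¹ * Real.exp (-s) := by
    intro s (hs : 0 < s)
    rw [norm_neg, norm_div, Complex.norm_exp, div_eq_inv_mul]
    gcongr
    · exact norm_le_norm_add_ofReal hz hs.le
    · simpa using hz
  have h_bound_ae := (ae_restrict_mem (μ := volume) measurableSet_Ioi).mono h_bound
  have h_exp_int : IntegrableOn (fun s : ℝ => ‖z‖⁻¹ * Real.exp (-s)) (Set.Ioi 0) :=
    (integrableOn_exp_neg_Ioi 0).const_mul _
  have h_int : IntegrableOn (fun s : ℝ => -(Complex.exp (-(z + s)) / (z + s))) (Set.Ioi 0) :=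
    h_exp_int.mono' (Measurable.aestronglyMeasurable (by fun_prop)) h_bound_ae
  have h_ftc := integral_Ioi_of_hasDerivAt_of_tendsto' h_deriv h_int
    (tendsto_ein_add_sub_log_add_atTop hz)
  calc ‖ein z - Complex.log z - Real.eulerMascheroniConstant‖
      = ‖∫ s in Set.Ioi (0 : ℝ), -(Complex.exp (-(z + s)) / (z + s))‖ := by
        rw [h_ftc, norm_sub_rev, Complex.ofReal_zero, add_zero]
    _ ≤ ∫ s in Set.Ioi (0 : ℝ), ‖z‖⁻¹ * Real.exp (-s) :=
        norm_integral_le_of_norm_le h_exp_int h_bound_ae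
    _ = ‖z‖⁻¹ := by rw [integral_const_mul, integral_exp_neg_Ioi_zero, mul_one]

end Ein

section Integrals

lemma integral_dslope_cos (a : ℝ) {b c : ℝ} (hbc : b ≤ c) :
    ∫ r in b..c, dslope (fun r => Real.cos (a * r)) c r =
      (Complex.exp (a * c * Complex.I) * ein (a * (c - b) * Complex.I)).re := by
  set P : ℝ → ℝ := fun r =>
    -(Complex.exp (a * c * Complex.I) * ein (a * (c - r) * Complex.I)).re with hP
  have hP_cont : Continuous P := by
    have := continuous_ein
    fun_prop
  have hP_deriv : ∀ r ∈ Set.Ioo b c, HasDerivAt P (dslope (fun r => Real.cos (a * r)) c r) r := by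
    intro r hr
    have h_lin : HasDerivAt (fun w : ℂ => a * (c - w) * Complex.I) (-(a * Complex.I)) r := by
      simpa using ((((hasDerivAt_id (r : ℂ)).const_sub (c : ℂ)).const_mul (a : ℂ)).mul_const
        Complex.I)
    refine (((hasDerivAt_ein _).comp (r : ℂ) h_lin).const_mul
      (Complex.exp (a * c * Complex.I))).real_of_complex.neg.congr_deriv ?_
    have h_exp : Complex.exp (a * c * Complex.I) * Complex.exp (-(a * (c - r) * Complex.I)) =
        Complex.exp ((a * r : ℝ) * Complex.I) := by
      rw [← Complex.exp_add]
      push_cast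
      ring_nf
    rw [dslope_of_ne _ hr.2.ne, slope_def_field, eq_div_iff (sub_ne_zero.2 hr.2.ne),
      ← Complex.exp_ofReal_mul_I_re (a * r), ← Complex.exp_ofReal_mul_I_re (a * c), ← h_exp,
      ← Complex.neg_re, ← Complex.re_mul_ofReal, ← Complex.sub_re]
    congr 1
    have h_mul := mul_dslope_one_sub_exp_neg (a * (c - r) * Complex.I)
    push_cast
    linear_combination -Complex.exp (a * c * Complex.I) * h_mul
  rw [intervalIntegral.integral_eq_sub_of_hasDerivAt_of_le hbc hP_cont.continuousOn hP_deriv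
    ((continuous_dslope (by fun_prop) c).intervalIntegrable _ _)]
  simp [hP, ein_zero]

lemma abs_integral_mul_cos_le {g g' : ℝ → ℝ} {a b c : ℝ} (ha : 0 < a) (hbc : b ≤ c)
    (hg : ∀ r ∈ Set.uIcc b c, HasDerivAt g (g' r) r) (hg' : IntervalIntegrable g' volume b c) :
    |∫ r in b..c, g r * Real.cos (a * r)| ≤ (|g b| + |g c| + ∫ r in b..c, |g' r|) / a := by
  have h_sin (r : ℝ) : HasDerivAt (fun r => Real.sin (a * r) / a) (Real.cos (a * r)) r := by
    refine (((hasDerivAt_const_mul a).sin).div_const a).congr_deriv ?_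
    field_simp
  have h_sin_le (x r : ℝ) : |x * (Real.sin (a * r) / a)| ≤ |x| / a := by
    rw [abs_mul, abs_div, abs_of_pos ha, ← mul_div_assoc]
    gcongr
    exact mul_le_of_le_one_right (abs_nonneg x) (Real.abs_sin_le_one _)
  have h_rem : |∫ r in b..c, g' r * (Real.sin (a * r) / a)| ≤ (∫ r in b..c, |g' r|) / a := by
    rw [← intervalIntegral.integral_div]
    rw [← Real.norm_eq_abs]
    exact intervalIntegral.norm_integral_le_of_norm_le hbc
      (.of_forall fun r _ => h_sin_le (g' r) r) (hg'.abs.div_const a)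
  rw [intervalIntegral.integral_mul_deriv_eq_deriv_mul hg (fun r _ => h_sin r) hg'
    (Continuous.intervalIntegrable (by fun_prop) _ _)]
  calc _ ≤ |g c| / a + |g b| / a + (∫ r in b..c, |g' r|) / a :=
        (abs_sub _ _).trans (add_le_add ((abs_sub _ _).trans
          (add_le_add (h_sin_le _ _) (h_sin_le _ _))) h_rem)
    _ = _ := by ring

/-- Partial fractions: `2 c / (c² - r²) = 1 / (c - r) + 1 / (c + r)`, and `r ↦ -r` swaps the
two terms. -/
lemma mul_integral_sub_div_sq_sub_sq {f : ℝ → ℝ} (hf : f.Even) {c : ℝ}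
    (hfc : IntervalIntegrable (dslope f c) volume (-c) c) :
    c * ∫ r in -c..c, (f r - f c) / (c ^ 2 - r ^ 2) = -∫ r in -c..c, dslope f c r := by
  have h_refl : IntervalIntegrable (fun r => dslope f c (-r)) volume (-c) c := by
    simpa using ((IntervalIntegrable.iff_comp_neg).1 hfc).symm
  have h_refl_int : ∫ r in -c..c, dslope f c (-r) = ∫ r in -c..c, dslope f c r := by
    simp
  have h_ae : ∀ᵐ r : ℝ, r ∈ Set.uIoc (-c) c → c * ((f r - f c) / (c ^ 2 - r ^ 2)) =
      -(dslope f c r + dslope f c (-r)) / 2 := by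
    filter_upwards [Measure.ae_ne volume c, Measure.ae_ne volume (-c)] with r hrc hrc' _
    have h_sub : r - c ≠ 0 := sub_ne_zero.2 hrc
    have h_add : r + c ≠ 0 := by rwa [← sub_neg_eq_add, sub_ne_zero]
    have h_sq : c ^ 2 - r ^ 2 ≠ 0 := by
      rw [show c ^ 2 - r ^ 2 = -((r - c) * (r + c)) by ring]
      exact neg_ne_zero.2 (mul_ne_zero h_sub h_add)
    have h_neg : -r - c ≠ 0 := by rwa [← neg_add', neg_ne_zero]
    rw [dslope_of_ne _ hrc, dslope_of_ne _ (sub_ne_zero.1 h_neg), slope_def_field,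
      slope_def_field, hf r]
    field_simp
    ring
  rw [← intervalIntegral.integral_const_mul, intervalIntegral.integral_congr_ae h_ae,
    intervalIntegral.integral_div, intervalIntegral.integral_neg,
    intervalIntegral.integral_add hfc h_refl, h_refl_int]
  ring

lemma abs_re_exp_mul_ein_sub_le {x : ℝ} (hx : 0 < x) (θ : ℝ) :
    |(Complex.exp (θ * Complex.I) * ein (x * Complex.I)).re -
      ((Real.eulerMascheroniConstant + Real.log x) * Real.cos θ - π / 2 * Real.sin θ)| ≤ 1 / x := by
  have h_log : Complex.log (x * Complex.I) = Real.log x + π / 2 * Complex.I := by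
    rw [Complex.log_ofReal_mul hx Complex.I_ne_zero, Complex.log_I]
  have h_re : (Complex.exp (θ * Complex.I) * ein (x * Complex.I)).re -
      ((Real.eulerMascheroniConstant + Real.log x) * Real.cos θ - π / 2 * Real.sin θ) =
      (Complex.exp (θ * Complex.I) * (ein (x * Complex.I) - Complex.log (x * Complex.I) -
        Real.eulerMascheroniConstant)).re := by
    rw [h_log, mul_sub, mul_sub, mul_add]
    simp only [Complex.sub_re, Complex.add_re, Complex.mul_re, Complex.mul_im,
      Complex.exp_ofReal_mul_I_re, Complex.exp_ofReal_mul_I_im, Complex.ofReal_re,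
      Complex.ofReal_im, Complex.div_ofNat_re, Complex.div_ofNat_im, Complex.I_re, Complex.I_im]
    ring
  calc _ ≤ ‖ein (x * Complex.I) - Complex.log (x * Complex.I) -
        Real.eulerMascheroniConstant‖ := by
        rw [h_re]
        refine (Complex.abs_re_le_norm _).trans_eq ?_
        rw [norm_mul, Complex.norm_exp_ofReal_mul_I, one_mul]
    _ ≤ ‖x * Complex.I‖⁻¹ := norm_ein_sub_log_sub_eulerMascheroniConstant_le (by simp)
        (mul_ne_zero (Complex.ofReal_ne_zero.2 hx.ne') Complex.I_ne_zero)
    _ = 1 / x := by simp [abs_of_pos hx]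

lemma mul_integral_even_mul_cos_sub_div_sq_sub_sq {h : ℝ → ℝ} (h_even : h.Even) (a : ℝ) {c : ℝ}
    (hc : 0 ≤ c) (hh : DifferentiableAt ℝ h c)
    (h_int : IntervalIntegrable (dslope h c) volume (-c) c) :
    c * ∫ r in -c..c, (h r * Real.cos (a * r) - h c * Real.cos (a * c)) / (c ^ 2 - r ^ 2) =
      -(∫ r in -c..c, dslope h c r * Real.cos (a * r)) -
        h c * (Complex.exp ((a * c : ℝ) * Complex.I) * ein ((2 * a * c : ℝ) * Complex.I)).re := by
  have h_int_cos : IntervalIntegrable (fun r => dslope h c r * Real.cos (a * r)) volume (-c) c :=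
    h_int.mul_continuousOn (by fun_prop)
  have h_int_slope : IntervalIntegrable (fun r => h c * dslope (fun r => Real.cos (a * r)) c r)
      volume (-c) c :=
    ((continuous_dslope (by fun_prop) c).const_mul _).intervalIntegrable _ _
  have h_dslope : dslope (fun r => h r * Real.cos (a * r)) c = fun r =>
      dslope h c r * Real.cos (a * r) + h c * dslope (fun r => Real.cos (a * r)) c r :=
    funext (dslope_mul hh (by fun_prop))
  have h_cos_even : (fun r => h r * Real.cos (a * r)).Even := fun r => by
    simp only [h_even r, mul_neg, Real.cos_neg]
  rw [mul_integral_sub_div_sq_sub_sq h_cos_even (h_dslope ▸ h_int_cos.add h_int_slope), h_dslope,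
    intervalIntegral.integral_add h_int_cos h_int_slope, intervalIntegral.integral_const_mul,
    integral_dslope_cos a (neg_le_self hc)]
  push_cast
  ring_nf

theorem abs_mul_integral_even_mul_cos_sub_le {h g' : ℝ → ℝ} (h_even : h.Even) {a c : ℝ}
    (ha : 0 < a) (hc : 0 < c) (hg : ∀ r ∈ Set.uIcc (-c) c, HasDerivAt (dslope h c) (g' r) r)
    (hg' : IntervalIntegrable g' volume (-c) c) :
    |c * (∫ r in -c..c, (h r * Real.cos (a * r) - h c * Real.cos (a * c)) / (c ^ 2 - r ^ 2)) -
        h c * (π / 2 * Real.sin (a * c) -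
          (Real.eulerMascheroniConstant + Real.log (2 * a * c)) * Real.cos (a * c))| ≤
      (|deriv h c| + (∫ r in -c..c, |g' r|) + |h c| / (2 * c)) / a := by
  have hh : DifferentiableAt ℝ h c :=
    continuousAt_dslope_same.1 (hg c Set.right_mem_uIcc).continuousAt
  have h_int : IntervalIntegrable (dslope h c) volume (-c) c :=
    ContinuousOn.intervalIntegrable fun r hr => (hg r hr).continuousAt.continuousWithinAt
  have h_left : dslope h c (-c) = 0 := by
    rw [dslope_of_ne _ (by linarith), slope_def_field, h_even c, sub_self, zero_div]
  have h_slope := abs_integral_mul_cos_le ha (neg_le_self hc.le) hg hg'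
  rw [h_left, abs_zero, zero_add, dslope_same] at h_slope
  have h_ein := mul_le_mul_of_nonneg_left
    (abs_re_exp_mul_ein_sub_le (by positivity : 0 < 2 * a * c) (a * c)) (abs_nonneg (h c))
  rw [← abs_mul] at h_ein
  rw [mul_integral_even_mul_cos_sub_div_sq_sub_sq h_even a hc.le hh h_int]
  set R := (Complex.exp ((a * c : ℝ) * Complex.I) * ein ((2 * a * c : ℝ) * Complex.I)).re
  calc _ = |(∫ r in -c..c, dslope h c r * Real.cos (a * r)) + h c * (R -
        ((Real.eulerMascheroniConstant + Real.log (2 * a * c)) * Real.cos (a * c) -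
          π / 2 * Real.sin (a * c)))| := by
        rw [← abs_neg]
        congr 1
        ring
    _ ≤ (|deriv h c| + ∫ r in -c..c, |g' r|) / a + |h c| * (1 / (2 * a * c)) :=
        (abs_add_le _ _).trans (add_le_add h_slope h_ein)
    _ = _ := by
        field_simp

end Integrals

section Sinc

lemma sinc_ne_zero {x : ℝ} (hx : |x| < π) : Real.sinc x ≠ 0 := by
  rcases eq_or_ne x 0 with rfl | hx0
  · simp
  · rw [Real.sinc_of_ne_zero hx0]
    refine div_ne_zero ?_ hx0
    rwa [Ne, Real.sin_eq_zero_iff_of_lt_of_lt (abs_lt.1 hx).1 (abs_lt.1 hx).2]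

lemma analyticAt_sinc (x : ℝ) : AnalyticAt ℝ Real.sinc x :=
  Real.sinc_eq_dslope ▸ analyticAt_dslope Real.analyticAt_sin Real.analyticAt_sin

lemma div_sin_mul {c r : ℝ} (hr : r ≠ 0) :
    r / Real.sin (c * r) = (c * Real.sinc (c * r))⁻¹ := by
  rcases eq_or_ne c 0 with rfl | hc
  · simp
  rw [Real.sinc_of_ne_zero (mul_ne_zero hc hr)]
  field_simp

lemma analyticAt_inv_mul_sinc {c r : ℝ} (hc : c ≠ 0) (hcr : |c * r| < π) :
    AnalyticAt ℝ (fun r => (c * Real.sinc (c * r))⁻¹) r :=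
  (analyticAt_const.mul ((analyticAt_sinc _).comp (by fun_prop))).inv
    (mul_ne_zero hc (sinc_ne_zero hcr))

lemma integral_mul_cos_div_sin_eq (a c : ℝ) :
    ∫ r in Set.Ioo (-1 : ℝ) 1,
        (r * Real.cos (a * r) / Real.sin (c * r) - Real.cos a / Real.sin c) / (1 - r ^ 2) =
      ∫ r in (-1 : ℝ)..1, ((c * Real.sinc (c * r))⁻¹ * Real.cos (a * r) -
        (c * Real.sinc (c * 1))⁻¹ * Real.cos a) / (1 - r ^ 2) := by
  rw [intervalIntegral.integral_of_le (by norm_num), integral_Ioc_eq_integral_Ioo]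
  refine setIntegral_congr_ae measurableSet_Ioo ?_
  filter_upwards [Measure.ae_ne volume 0] with r hr _
  rw [← div_sin_mul hr, ← div_sin_mul one_ne_zero, mul_one]
  ring

theorem exists_abs_integral_mul_cos_div_sin_sub_le {c : ℝ} (hc0 : c ≠ 0) (hc : |c| < π) :
    ∃ C : ℝ, 0 < C ∧ ∀ a : ℝ, 0 < a →
      |(∫ r in Set.Ioo (-1 : ℝ) 1,
          (r * Real.cos (a * r) / Real.sin (c * r) - Real.cos a / Real.sin c) / (1 - r ^ 2)) -
        (π / 2 * Real.sin a - (Real.eulerMascheroniConstant + Real.log (2 * a)) * Real.cos a) /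
          Real.sin c| ≤ C / a := by
  set h : ℝ → ℝ := fun r => (c * Real.sinc (c * r))⁻¹ with hh
  have h_even : h.Even := fun r => by simp only [hh, mul_neg, Real.sinc_neg]
  have h_one : h 1 = 1 / Real.sin c := by
    simp only [hh]
    rw [← div_sin_mul one_ne_zero, mul_one]
  have h_analytic {r : ℝ} (hr : |r| ≤ 1) : AnalyticAt ℝ h r := by
    refine analyticAt_inv_mul_sinc hc0 (lt_of_le_of_lt ?_ hc)
    rw [abs_mul]
    exact mul_le_of_le_one_right (abs_nonneg c) hr
  have h_slope : AnalyticOnNhd ℝ (dslope h 1) (Set.uIcc (-1) 1) := by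
    rw [Set.uIcc_of_le (by norm_num)]
    exact fun r hr => analyticAt_dslope (h_analytic (by simp)) (h_analytic (abs_le.2 hr))
  have h_nonneg : 0 ≤ ∫ r in (-1 : ℝ)..1, |deriv (dslope h 1) r| :=
    intervalIntegral.integral_nonneg (by norm_num) fun r _ => abs_nonneg _
  refine ⟨|deriv h 1| + (∫ r in (-1 : ℝ)..1, |deriv (dslope h 1) r|) + |h 1| / 2 + 1,
    by positivity, fun a ha => ?_⟩
  have h_le := abs_mul_integral_even_mul_cos_sub_le h_even ha one_pos
    (fun r hr => (h_slope r hr).differentiableAt.hasDerivAt)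
    h_slope.deriv.continuousOn.intervalIntegrable
  simp only [one_mul, mul_one, one_pow] at h_le
  rw [integral_mul_cos_div_sin_eq, div_eq_mul_one_div, ← h_one, mul_comm _ (h 1)]
  exact h_le.trans (div_le_div_of_nonneg_right (le_add_of_nonneg_right zero_le_one) ha.le)

end Sinc

theorem stmt_11_general (t : ℝ) (ht : t ∈ Set.Ioo 0 (2 * π)) :
    ∃ C : ℝ, 0 < C ∧ ∀ ℓ : ℝ, -1 < ℓ →
      |(∫ r in Set.Ioo (-1 : ℝ) 1,
          (r * Real.cos ((ℓ + 1) * t * r / 2) / Real.sin (t * r / 2)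
              - Real.cos ((ℓ + 1) * t / 2) / Real.sin (t / 2)) / (t * (1 - r ^ 2)))
        + (Real.log (t ^ 2) + 2 * Real.eulerMascheroniConstant)
            * Real.cos ((ℓ + 1) * t / 2) / (t * Real.sin (t / 2))
        + Real.cos ((ℓ + 1) * t / 2) / (t * Real.sin (t / 2)) * Real.log (ℓ + 1)
        - ((π / 2) * Real.sin ((ℓ + 1) * t / 2)
            + (Real.eulerMascheroniConstant + Real.log t) * Real.cos ((ℓ + 1) * t / 2))
          / (t * Real.sin (t / 2))|
      ≤ C / (ℓ + 1) := by
  obtain ⟨ht0, ht_lt⟩ := ht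
  obtain ⟨C, hC0, hC⟩ := exists_abs_integral_mul_cos_div_sin_sub_le (c := t / 2) (by positivity)
    (by rw [abs_of_pos (by positivity)]; linarith)
  refine ⟨2 * C / t ^ 2, by positivity, fun ℓ hℓ => ?_⟩
  have hℓ0 : 0 < ℓ + 1 := by linarith
  set a := (ℓ + 1) * t / 2 with ha
  have h_log : Real.log (2 * a) = Real.log (ℓ + 1) + Real.log t := by
    rw [ha, mul_div_cancel₀ _ two_ne_zero, Real.log_mul hℓ0.ne' ht0.ne']
  have h_le := hC a (by positivity)
  rw [h_log] at h_le
  set J := ∫ r in Set.Ioo (-1 : ℝ) 1,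
    (r * Real.cos (a * r) / Real.sin (t / 2 * r) - Real.cos a / Real.sin (t / 2)) / (1 - r ^ 2)
  have h_integral : ∫ r in Set.Ioo (-1 : ℝ) 1, (r * Real.cos ((ℓ + 1) * t * r / 2) /
      Real.sin (t * r / 2) - Real.cos a / Real.sin (t / 2)) / (t * (1 - r ^ 2)) = t⁻¹ * J := by
    rw [← integral_const_mul]
    refine integral_congr_ae (.of_forall fun r => ?_)
    simp only [ha, mul_div_right_comm _ r, div_mul_eq_div_div_swap _ t, div_eq_inv_mul _ t]
  calc _ = |t⁻¹ * (J - (π / 2 * Real.sin a - (Real.eulerMascheroniConstant +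
        (Real.log (ℓ + 1) + Real.log t)) * Real.cos a) / Real.sin (t / 2))| := by
        rw [h_integral, Real.log_pow]
        congr 1
        push_cast
        ring
    _ ≤ t⁻¹ * (C / a) := by
        rw [abs_mul, abs_of_pos (inv_pos.2 ht0)]
        gcongr
    _ = 2 * C / t ^ 2 / (ℓ + 1) := by
        rw [ha]
        field_simp

/-- Theorem 9.3: the asymptotic expansion as `ℓ → +∞` of the pairing of the equivariant
Bott–Chern current with `Td·ch(O(ℓ))` on `P¹(ℂ)`. -/
theorem stmt_11 (t : ℝ) (ht : t ∈ Set.Ioo 0 (2 * π)) :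
    ∃ C : ℝ, 0 < C ∧ ∀ ℓ : ℕ, 1 ≤ ℓ →
      |(∫ r in Set.Ioo (-1 : ℝ) 1,
          (r * Real.cos (((ℓ : ℝ) + 1) * t * r / 2) / Real.sin (t * r / 2)
              - Real.cos (((ℓ : ℝ) + 1) * t / 2) / Real.sin (t / 2)) / (t * (1 - r ^ 2)))
        + (Real.log (t ^ 2) + 2 * Real.eulerMascheroniConstant)
            * Real.cos (((ℓ : ℝ) + 1) * t / 2) / (t * Real.sin (t / 2))
        + Real.cos (((ℓ : ℝ) + 1) * t / 2) / (t * Real.sin (t / 2)) * Real.log ((ℓ : ℝ) + 1)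
        - ((π / 2) * Real.sin (((ℓ : ℝ) + 1) * t / 2)
            + (Real.eulerMascheroniConstant + Real.log t) * Real.cos (((ℓ : ℝ) + 1) * t / 2))
          / (t * Real.sin (t / 2))|
      ≤ C / (ℓ : ℝ) := by
  obtain ⟨C, hC0, hC⟩ := stmt_11_general t ht
  refine ⟨C, hC0, fun ℓ hℓ => (hC ℓ (by linarith [ℓ.cast_nonneg (α := ℝ)])).trans ?_⟩
  gcongr
  exact le_add_of_nonneg_right zero_le_one
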